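/- arXiv:1001.3164 — 2 statements merged into one kernel-verified Lean document; each statement's English description precedes it below -/
import Mathlib

section
/- Let $V$ be a finite-dimensional complex vector space and let $G \le GL(V)$ be a finite subgroup generated by a set of reflections of order 2 (involutions whose fixed-point subspace is a hyperplane). Then $\dim_{\mathbb{C}} (\Lambda V)^{G} = 2^{\dim_{\mathbb{C}} V^{G}}$, where $V^{G}$ is the subspace of $G$-fixed vectors in $V$. -/
namespace ReflInv

open CliffordAlgebra (contractLeft)

/-- The exterior algebra map induced by `v ↦ v + f v • a` is `x ↦ x + a ∧ (f ⌋ x)`. -/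
theorem map_rankOne {V : Type*} [AddCommGroup V] [Module ℂ V]
    (f : Module.Dual ℂ V) (a : V) (T : V →ₗ[ℂ] V) (hT : ∀ v, T v = v + f v • a)
    (x : ExteriorAlgebra ℂ V) :
    ExteriorAlgebra.map T x =
      x + ExteriorAlgebra.ι ℂ a * (contractLeft (Q := (0 : QuadraticForm ℂ V)) f x) := by
  induction x using CliffordAlgebra.left_induction with
  | algebraMap r =>
    rw [CliffordAlgebra.contractLeft_algebraMap, mul_zero, add_zero]
    exact AlgHom.commutes _ r
  | add x y hx hy => rw [map_add, map_add, hx, hy, mul_add]; abel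
  | ι_mul x v hx =>
    rw [CliffordAlgebra.contractLeft_ι_mul, map_mul, hx]
    change ExteriorAlgebra.map T (ExteriorAlgebra.ι ℂ v) * _ =
      ExteriorAlgebra.ι ℂ v * x + ExteriorAlgebra.ι ℂ a * (f v • x - ExteriorAlgebra.ι ℂ v * _)
    rw [ExteriorAlgebra.map_apply_ι, hT, map_add, map_smul]
    generalize contractLeft (Q := (0 : QuadraticForm ℂ V)) f x = y
    have h1 := ExteriorAlgebra.ι_sq_zero (R := ℂ) a
    have h2 : ExteriorAlgebra.ι ℂ v * ExteriorAlgebra.ι ℂ a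
        = - (ExteriorAlgebra.ι ℂ a * ExteriorAlgebra.ι ℂ v) :=
      eq_neg_of_add_eq_zero_left (ExteriorAlgebra.ι_add_mul_swap v a)
    rw [add_mul, mul_add, mul_add, ← mul_assoc, h2, smul_mul_assoc, smul_mul_assoc,
      ← mul_assoc, h1, zero_mul, smul_zero, add_zero, mul_sub, mul_smul_comm, neg_mul, mul_assoc]
    abel

/-- There is an endomorphism landing in the common kernel of `F` and acting trivially on
elements killed by all contractions with members of `F`. -/
theorem exists_proj {V : Type*} [AddCommGroup V] [Module ℂ V] [FiniteDimensional ℂ V]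
    (F : Set (Module.Dual ℂ V)) (n : ℕ) : ∀ T : V →ₗ[ℂ] V,
    Module.finrank ℂ (LinearMap.range T) ≤ n →
    (∀ x : ExteriorAlgebra ℂ V,
      (∀ f ∈ F, contractLeft (Q := (0 : QuadraticForm ℂ V)) f x = 0) →
        ExteriorAlgebra.map T x = x) →
    ∃ T : V →ₗ[ℂ] V, (∀ f ∈ F, ∀ u, f (T u) = 0) ∧
      (∀ x : ExteriorAlgebra ℂ V,
      (∀ f ∈ F, contractLeft (Q := (0 : QuadraticForm ℂ V)) f x = 0) →
        ExteriorAlgebra.map T x = x) := by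
  induction n with
  | zero =>
    intro T hr hT
    refine ⟨T, fun f _ u => ?_, hT⟩
    have h0 : LinearMap.range T = ⊥ := Submodule.finrank_eq_zero.1 (by omega)
    rw [LinearMap.range_eq_bot.1 h0]; simp
  | succ n ih =>
    intro T hr hT
    by_cases h : ∀ f ∈ F, ∀ u, f (T u) = 0
    · exact ⟨T, h, hT⟩
    push Not at h
    obtain ⟨f, hf, u, hu⟩ := h
    let P : V →ₗ[ℂ] V := LinearMap.id + f.smulRight (-(f (T u))⁻¹ • T u)
    have hP : ∀ v, P v = v + f v • (-(f (T u))⁻¹ • T u) := fun v => rfl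
    apply ih (P ∘ₗ T)
    · have hlt : LinearMap.range (P ∘ₗ T) < LinearMap.range T := by
        refine lt_of_le_of_ne ?_ ?_
        · rintro _ ⟨v, rfl⟩
          rw [LinearMap.comp_apply, hP]
          exact add_mem ⟨v, rfl⟩ (Submodule.smul_mem _ _ (Submodule.smul_mem _ _ ⟨u, rfl⟩))
        · intro he
          have hm : T u ∈ LinearMap.range (P ∘ₗ T) := he ▸ ⟨u, rfl⟩
          obtain ⟨v, hv⟩ := hm
          apply hu
          rw [← hv, LinearMap.comp_apply, hP]
          simp only [map_add, map_smul, smul_eq_mul]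
          field_simp
          ring
      have := Submodule.finrank_lt_finrank_of_lt hlt
      omega
    · intro x hx
      rw [← ExteriorAlgebra.map_comp_map, AlgHom.comp_apply, hT x hx, map_rankOne f _ P hP,
        hx f hf, mul_zero, add_zero]

theorem exists_functional {V : Type*} [AddCommGroup V] [Module ℂ V] [FiniteDimensional ℂ V]
    (s : V ≃ₗ[ℂ] V) (h : s * s = 1 ∧
      Module.finrank ℂ (LinearMap.ker (s.toLinearMap - LinearMap.id)) + 1 =
        Module.finrank ℂ V) :
    ∃ (f : Module.Dual ℂ V) (a : V), f a ≠ 0 ∧ ∀ v, s v = v + f v • a := by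
  obtain ⟨h2, hk⟩ := h
  have hrn := LinearMap.finrank_range_add_finrank_ker (s.toLinearMap - LinearMap.id)
  have hr : Module.finrank ℂ (LinearMap.range (s.toLinearMap - LinearMap.id)) = 1 := by omega
  obtain ⟨⟨a, w, hw⟩, ha, hc⟩ := finrank_eq_one_iff'.1 hr
  have ha0 : a ≠ 0 := fun h => ha (Subtype.ext h)
  have hc' : ∀ v : V, ∃ c : ℂ, s v = v + c • a := by
    intro v
    obtain ⟨c, hc⟩ := hc ⟨_, v, rfl⟩
    refine ⟨c, ?_⟩
    have := congrArg Subtype.val hc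
    simp at this
    rw [this]; abel
  choose c hc' using hc'
  have inj : ∀ x y : ℂ, x • a = y • a → x = y := fun x y h => smul_left_injective ℂ ha0 h
  let f : Module.Dual ℂ V :=
    { toFun := c
      map_add' := fun x y => inj _ _ (by
        have := hc' (x + y)
        rw [map_add, hc' x, hc' y] at this
        rw [add_smul]
        apply add_left_cancel (a := x + y)
        rw [← this]; abel)
      map_smul' := fun r x => inj _ _ (by
        have := hc' (r • x)
        rw [map_smul, hc' x, smul_add] at this
        rw [RingHom.id_apply, smul_assoc]
        exact (add_left_cancel this).symm) }
  have hf : ∀ v, s v = v + f v • a := hc'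
  refine ⟨f, a, fun h0 => ?_, hf⟩
  have hsa : s a = a := by rw [hf, h0, zero_smul, add_zero]
  have hw' : s w = w + a := by
    rw [← hw]; simp
  have h3 : s (s w) = w := by
    have := congrArg (fun g : V ≃ₗ[ℂ] V => g w) h2
    exact this
  rw [hw', map_add, hw', hsa, add_assoc] at h3
  have h4 : a + a = 0 := by simpa using h3
  rw [← two_smul ℂ] at h4
  exact ha0 ((smul_eq_zero.1 h4).resolve_left two_ne_zero)

theorem finrank_ext (W : Type*) [AddCommGroup W] [Module ℂ W] [FiniteDimensional ℂ W] :
    Module.finrank ℂ (ExteriorAlgebra ℂ W) = 2 ^ Module.finrank ℂ W := by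
  rw [Module.finrank_eq_card_basis (Module.finBasis ℂ W).ExteriorAlgebra]
  simp

end ReflInv

/-- If a finite subgroup `G` of `GL(V)` is generated by reflections of
order 2, then the space of `G`-invariants in the exterior algebra `Λ V` has dimension
`2 ^ dim V^G`. -/
theorem finrank_exteriorAlgebra_invariants_of_reflection_group
    {V : Type*} [AddCommGroup V] [Module ℂ V] [FiniteDimensional ℂ V]
    (G : Subgroup (V ≃ₗ[ℂ] V)) (hfin : (G : Set (V ≃ₗ[ℂ] V)).Finite)
    (S : Set (V ≃ₗ[ℂ] V)) (hgen : Subgroup.closure S = G)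
    (hrefl : ∀ s ∈ S, s ≠ 1 ∧ s * s = 1 ∧
      Module.finrank ℂ (LinearMap.ker (s.toLinearMap - LinearMap.id)) + 1 =
        Module.finrank ℂ V)
    (VG : Submodule ℂ V) (hVG : ∀ v : V, v ∈ VG ↔ ∀ g ∈ G, g v = v)
    (Inv : Submodule ℂ (ExteriorAlgebra ℂ V))
    (hInv : ∀ x : ExteriorAlgebra ℂ V,
      x ∈ Inv ↔ ∀ g ∈ G, ExteriorAlgebra.map ((g : V ≃ₗ[ℂ] V).toLinearMap) x = x) :
    Module.finrank ℂ Inv = 2 ^ Module.finrank ℂ VG := by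

  classical
  have hS : ∀ s ∈ S, s ∈ G := fun s hs => hgen ▸ Subgroup.subset_closure hs
  choose! f a hfa hfs using fun s hs => ReflInv.exists_functional s (hrefl s hs).2
  obtain ⟨T, hTF, hT⟩ := ReflInv.exists_proj (f '' S) _ (LinearMap.id : V →ₗ[ℂ] V) le_rfl
    (fun x _ => by rw [ExteriorAlgebra.map_id]; rfl)
  have hTV : ∀ u, T u ∈ VG := by
    intro u
    rw [hVG]
    intro g hg
    rw [← hgen] at hg
    induction hg using Subgroup.closure_induction with
    | mem s hs => rw [hfs s hs, hTF _ ⟨s, hs, rfl⟩ u, zero_smul, add_zero]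
    | one => rfl
    | mul x y _ _ hx hy => rw [LinearEquiv.mul_apply, hy, hx]
    | inv x _ hx =>
      change x.symm (T u) = T u
      rw [LinearEquiv.symm_apply_eq, hx]
  have key : Inv = LinearMap.range (ExteriorAlgebra.map VG.subtype).toLinearMap := by
    ext x
    rw [hInv]
    constructor
    · intro hx
      have hxT : ExteriorAlgebra.map T x = x := by
        apply hT
        rintro _ ⟨s, hs, rfl⟩
        have h1 := hx s (hS s hs)
        rw [ReflInv.map_rankOne (f s) (a s) _ (hfs s hs)] at h1
        have h2 : ExteriorAlgebra.ι ℂ (a s) *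
            (CliffordAlgebra.contractLeft (Q := (0 : QuadraticForm ℂ V)) (f s) x) = 0 := by
          simpa using h1
        have h3 := congrArg
          (CliffordAlgebra.contractLeft (Q := (0 : QuadraticForm ℂ V)) (f s)) h2
        erw [CliffordAlgebra.contractLeft_ι_mul, CliffordAlgebra.contractLeft_contractLeft,
          mul_zero, sub_zero, map_zero] at h3
        exact (smul_eq_zero.1 h3).resolve_left (hfa s hs)
      refine ⟨ExteriorAlgebra.map (T.codRestrict VG hTV) x, ?_⟩
      rw [AlgHom.toLinearMap_apply, ← AlgHom.comp_apply, ExteriorAlgebra.map_comp_map]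
      exact hxT
    · rintro ⟨y, rfl⟩ g hg
      rw [AlgHom.toLinearMap_apply, ← AlgHom.comp_apply, ExteriorAlgebra.map_comp_map]
      congr 2
      ext v
      exact (hVG v).1 v.2 g hg
  have hinj : Function.Injective (ExteriorAlgebra.map VG.subtype).toLinearMap :=
    ExteriorAlgebra.map_injective_field (Submodule.ker_subtype VG)
  rw [key, LinearMap.finrank_range_of_inj hinj, ReflInv.finrank_ext]
end

section
/- Let $G$ be a finite group, $V$ a finite-dimensional complex representation of $G$, and $H \le G$ a subgroup generated by elements each of which acts on $V$ as an involution whose fixed-point subspace in $V$ is a hyperplane. Let $\mathbb{C}[G/H]$ denote the permutation representation of $G$ on the left cosets $G/H$, and let $\Lambda V$ be the exterior algebra of $V$ with the induced $G$-action. Then $\dim_{\mathbb{C}} (\mathbb{C}[G/H] \otimes \Lambda V)^{G} = 2^{\dim_{\mathbb{C}} V^{H}}$, where the tensor product carries the diagonal $G$-action. -/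
open scoped TensorProduct

namespace ReflExt

section ext
variable {K V : Type*} [Field K] [AddCommGroup V] [Module K V]

/-- Contraction of the exterior algebra by a linear functional. -/
noncomputable def ctr : Module.Dual K V →ₗ[K] ExteriorAlgebra K V →ₗ[K] ExteriorAlgebra K V :=
  CliffordAlgebra.contractLeft (Q := (0 : QuadraticForm K V))

lemma ctr_ι_mul (f : Module.Dual K V) (v : V) (x : ExteriorAlgebra K V) :
    ctr f (ExteriorAlgebra.ι K v * x) = f v • x - ExteriorAlgebra.ι K v * ctr f x :=
  CliffordAlgebra.contractLeft_ι_mul _ _ _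

lemma ctr_ctr (f : Module.Dual K V) (x : ExteriorAlgebra K V) : ctr f (ctr f x) = 0 :=
  CliffordAlgebra.contractLeft_contractLeft _ _

lemma ctr_algebraMap (f : Module.Dual K V) (r : K) :
    ctr f (algebraMap K (ExteriorAlgebra K V) r) = 0 :=
  CliffordAlgebra.contractLeft_algebraMap _ _ _

lemma map_transvection (f : Module.Dual K V) (u : V) (x : ExteriorAlgebra K V) :
    ExteriorAlgebra.map (1 + f.smulRight u) x = x + ExteriorAlgebra.ι K u * ctr f x := by
  induction x using CliffordAlgebra.left_induction with
  | algebraMap r =>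
    have h1 := ctr_algebraMap f r
    have h2 := (ExteriorAlgebra.map (1 + f.smulRight u)).commutes r
    exact h2.trans (by rw [h1, mul_zero, add_zero])
  | add x y hx hy =>
    rw [map_add, map_add, hx, hy, mul_add]
    abel
  | ι_mul x v hx =>
    have h1 := ctr_ι_mul f v x
    have h2 := map_mul (ExteriorAlgebra.map (1 + f.smulRight u)) (ExteriorAlgebra.ι K v) x
    rw [hx, ExteriorAlgebra.map_apply_ι] at h2
    refine h2.trans (Eq.trans ?_
      (congrArg (fun z => ExteriorAlgebra.ι K v * x + ExteriorAlgebra.ι K u * z) h1).symm)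
    have h3 : ExteriorAlgebra.ι K u * (ExteriorAlgebra.ι K u * ctr f x) = 0 := by
      rw [← mul_assoc, ExteriorAlgebra.ι_sq_zero, zero_mul]
    have h4 : ExteriorAlgebra.ι K v * (ExteriorAlgebra.ι K u * ctr f x)
        = - (ExteriorAlgebra.ι K u * (ExteriorAlgebra.ι K v * ctr f x)) := by
      rw [← mul_assoc, ← mul_assoc, ← neg_mul]
      congr 1
      exact eq_neg_of_add_eq_zero_left (ExteriorAlgebra.ι_add_mul_swap v u)
    simp only [LinearMap.add_apply, Module.End.one_apply, LinearMap.smulRight_apply, map_add,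
      map_smul, add_mul, mul_add, smul_mul_assoc, h3, h4, mul_sub, mul_smul_comm, smul_zero]
    abel

lemma ctr_eq_zero_of_fixed (f : Module.Dual K V) (u : V) (hfu : f u ≠ 0)
    (x : ExteriorAlgebra K V) (hx : ExteriorAlgebra.map (1 + f.smulRight u) x = x) :
    ctr f x = 0 := by
  rw [map_transvection] at hx
  have h : ExteriorAlgebra.ι K u * ctr f x = 0 := by simpa using hx
  have h2 := congrArg (ctr f) h
  rw [ctr_ι_mul, ctr_ctr, mul_zero, sub_zero, map_zero] at h2
  exact (smul_eq_zero.mp h2).resolve_left hfu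

lemma mem_range_of_ctr [FiniteDimensional K V] (W : Submodule K V) (x : ExteriorAlgebra K V)
    (hx : ∀ f ∈ W.dualAnnihilator, ctr f x = 0) :
    x ∈ LinearMap.range (ExteriorAlgebra.map W.subtype).toLinearMap := by
  obtain ⟨π, hπ⟩ := LinearMap.exists_leftInverse_of_injective W.subtype W.ker_subtype
  have hπ' (w : W) : π w = w := LinearMap.congr_fun hπ w
  let q : V →ₗ[K] LinearMap.ker π := LinearMap.codRestrict _ (1 - W.subtype ∘ₗ π)
    (fun v => by simp [hπ'])
  have hq (v : V) : (q v : V) = v - π v := rfl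
  let c := Module.finBasis K (LinearMap.ker π)
  have hqc (j) : q (c j) = c j := by
    apply Subtype.ext
    rw [hq, LinearMap.mem_ker.mp (c j).2]
    simp
  let φ (i) : Module.Dual K V := -(c.coord i ∘ₗ q)
  have hφ (i) : φ i ∈ W.dualAnnihilator := by
    rw [Submodule.mem_dualAnnihilator]
    intro w hw
    have : q w = 0 := by
      apply Subtype.ext
      rw [hq, hπ' ⟨w, hw⟩]
      simp
    simp [φ, this]
  have key (s : Finset (Fin (Module.finrank K (LinearMap.ker π)))) :
      ExteriorAlgebra.map (1 + ∑ i ∈ s, (φ i).smulRight (c i : V)) x = x := by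
    induction s using Finset.induction_on with
    | empty =>
      simp only [Finset.sum_empty, add_zero]
      exact DFunLike.congr_fun (ExteriorAlgebra.map_id (R := K) (M := V)) x
    | insert j s hj ih =>
      have h1 : ExteriorAlgebra.map (1 + (φ j).smulRight (c j : V)) x = x := by
        rw [map_transvection, hx _ (hφ j), mul_zero, add_zero]
      have h2 : (1 + ∑ i ∈ insert j s, (φ i).smulRight (c i : V)) =
          (1 + ∑ i ∈ s, (φ i).smulRight (c i : V)) ∘ₗ (1 + (φ j).smulRight (c j : V)) := by
        have h3 : ∀ i ∈ s, φ i (c j) = 0 := by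
          intro i hi
          have : i ≠ j := fun h => hj (h ▸ hi)
          simp [φ, hqc, Finsupp.single_apply, this.symm]
        ext v
        rw [Finset.sum_insert hj]
        have h4 : ∑ i ∈ s, (φ i) ((φ j v) • (c j : V)) • (c i : V) = 0 :=
          Finset.sum_eq_zero fun i hi => by rw [map_smul, h3 i hi, smul_zero, zero_smul]
        simp only [LinearMap.add_apply, LinearMap.comp_apply, Module.End.one_apply,
          LinearMap.sum_apply, LinearMap.smulRight_apply, map_add, h4, add_zero, add_smul,
          Finset.sum_add_distrib]
        abel
      rw [h2, ← ExteriorAlgebra.map_comp_map, AlgHom.comp_apply, h1, ih]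
  have hfin : (1 + ∑ i, (φ i).smulRight (c i : V)) = W.subtype ∘ₗ π := by
    ext v
    have h5 := congrArg Subtype.val (c.sum_repr (q v))
    rw [hq, Submodule.coe_sum] at h5
    simp only [Submodule.coe_smul] at h5
    simp [φ, h5]
  have h := key Finset.univ
  rw [hfin, ← ExteriorAlgebra.map_comp_map, AlgHom.comp_apply] at h
  exact ⟨_, h⟩

lemma finrank_exterior [FiniteDimensional K V] :
    Module.finrank K (ExteriorAlgebra K V) = 2 ^ Module.finrank K V := by
  rw [Module.finrank_eq_card_basis (Module.finBasis K V).ExteriorAlgebra]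
  simp

lemma exists_transvection [FiniteDimensional K V] (h2 : (2 : K) ≠ 0) (s : V →ₗ[K] V)
    (hs : s * s = 1)
    (hr : Module.finrank K (LinearMap.ker (s - 1)) + 1 = Module.finrank K V) :
    ∃ (f : Module.Dual K V) (u : V), f u ≠ 0 ∧ s = 1 + f.smulRight u := by
  have h1 : Module.finrank K (LinearMap.range (s - 1)) = 1 := by
    have := LinearMap.finrank_range_add_finrank_ker (s - 1)
    omega
  let b := Module.basisUnique (Fin 1) h1
  let f : Module.Dual K V := b.coord 0 ∘ₗ (s - 1).rangeRestrict
  have hf (v : V) : s v - v = f v • (b 0 : V) := by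
    have := congrArg Subtype.val (b.sum_repr ((s - 1).rangeRestrict v))
    have h3 : s v - v = (b.repr ((s - 1).rangeRestrict v)) 0 • (b 0 : V) := by
      simpa using this.symm
    exact h3
  have hsf : s = 1 + f.smulRight (b 0 : V) := by
    ext v
    simp [← hf]
  have hb : (b 0 : V) ≠ 0 := fun h => b.ne_zero 0 (Subtype.ext h)
  refine ⟨f, b 0, ?_, hsf⟩
  intro h0
  obtain ⟨v, hv⟩ := (b 0).2
  have hfb := hf (b 0)
  rw [h0, zero_smul, sub_eq_zero] at hfb
  have hv' : s v = v + b 0 := by rw [← hv]; simp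
  have hss : s (s v) = v := LinearMap.congr_fun hs v
  rw [hv', map_add, hv', hfb, add_assoc, ← two_smul K (b 0 : V)] at hss
  simp [h2, hb] at hss

end ext

section frob
variable {K G M : Type*} [Field K] [Group G] [Finite G] [AddCommGroup M] [Module K M]
  (H : Subgroup G) (τ : Representation K G M)

open Classical in
/-- `K[X] ⊗ M` as finitely supported functions. -/
noncomputable def eqv (X : Type*) :
    (MonoidAlgebra K X) ⊗[K] M ≃ₗ[K] (X →₀ M) :=
  (TensorProduct.congr (MonoidAlgebra.coeffLinearEquiv K) (LinearEquiv.refl K M)).trans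
    (TensorProduct.finsuppScalarLeft K M X)

lemma eqv_act (g : G) (t : (MonoidAlgebra K (G ⧸ H)) ⊗[K] M) (x : G ⧸ H) :
    eqv (G ⧸ H) (((Representation.ofMulAction K G (G ⧸ H)).tprod τ) g t) x
      = τ g (eqv (G ⧸ H) t (g⁻¹ • x)) := by
  induction t using TensorProduct.induction_on with
  | zero => simp
  | add a b ha hb => simp only [map_add, Finsupp.add_apply, ha, hb]
  | tmul a m =>
    simp [eqv, TensorProduct.finsuppScalarLeft_apply_tmul_apply, Representation.coeff_ofMulAction]

lemma mem_inv_iff (t : (MonoidAlgebra K (G ⧸ H)) ⊗[K] M) :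
    t ∈ ((Representation.ofMulAction K G (G ⧸ H)).tprod τ).invariants ↔
      ∀ (g : G) (x : G ⧸ H), τ g (eqv (G ⧸ H) t x) = eqv (G ⧸ H) t (g • x) := by
  rw [Representation.mem_invariants]
  constructor
  · intro h g x
    have := eqv_act H τ g t (g • x)
    rw [h g, inv_smul_smul] at this
    exact this.symm
  · intro h g
    apply (eqv (G ⧸ H)).injective
    ext x
    rw [eqv_act, h, smul_inv_smul]

lemma finrank_frob :
    Module.finrank K ((Representation.ofMulAction K G (G ⧸ H)).tprod τ).invariants =
      Module.finrank K (Representation.invariants (τ.comp H.subtype)) := by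
  let F : ((Representation.ofMulAction K G (G ⧸ H)).tprod τ).invariants →ₗ[K]
      Representation.invariants (τ.comp H.subtype) :=
    LinearMap.codRestrict _
      (Finsupp.lapply ((1 : G) : G ⧸ H) ∘ₗ (eqv (G ⧸ H)).toLinearMap ∘ₗ Submodule.subtype _)
      (by
        intro t
        rw [Representation.mem_invariants]
        intro h
        have h1 := (mem_inv_iff H τ t).1 t.2 h ((1 : G) : G ⧸ H)
        have h2 : (h : G) • ((1 : G) : G ⧸ H) = ((1 : G) : G ⧸ H) := by
          rw [MulAction.Quotient.smul_coe, QuotientGroup.eq]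
          simp
        rw [h2] at h1
        exact h1)
  have hF (t) : (F t : M) = eqv (G ⧸ H) (t : _ ⊗[K] M) ((1 : G) : G ⧸ H) := rfl
  refine (LinearEquiv.ofBijective F ⟨?_, ?_⟩).finrank_eq
  · intro t t' h
    apply Subtype.ext
    apply (eqv (G ⧸ H)).injective
    ext x
    obtain ⟨g, rfl⟩ := QuotientGroup.mk_surjective x
    have h0 := congrArg Subtype.val h
    rw [hF, hF] at h0
    have h1 := (mem_inv_iff H τ t).1 t.2 g ((1 : G) : G ⧸ H)
    have h2 := (mem_inv_iff H τ t').1 t'.2 g ((1 : G) : G ⧸ H)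
    rw [MulAction.Quotient.smul_coe, smul_eq_mul, mul_one] at h1 h2
    rw [← h1, ← h2, h0]
  · intro m
    have hm : ∀ a b : G, (a : G ⧸ H) = b → τ a m = τ b m := by
      intro a b hab
      rw [QuotientGroup.eq] at hab
      have := (Representation.mem_invariants _ _).1 m.2 ⟨_, hab⟩
      have h3 : τ (a⁻¹ * b) m = m := this
      conv_lhs => rw [← h3, ← Module.End.mul_apply, ← map_mul, mul_inv_cancel_left]
    let φ : G ⧸ H →₀ M := Finsupp.equivFunOnFinite.symm (fun x => τ x.out m)
    have hφ (g : G) : φ (g : G ⧸ H) = τ g m := hm _ _ (QuotientGroup.out_eq' _)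
    refine ⟨⟨(eqv (G ⧸ H)).symm φ, ?_⟩, ?_⟩
    · rw [mem_inv_iff]
      intro g x
      obtain ⟨a, rfl⟩ := QuotientGroup.mk_surjective x
      rw [LinearEquiv.apply_symm_apply, MulAction.Quotient.smul_coe, hφ, hφ, smul_eq_mul,
        map_mul, Module.End.mul_apply]
    · apply Subtype.ext
      rw [hF, LinearEquiv.apply_symm_apply, hφ]
      simp

end frob

end ReflExt

/-- Let `G` be a finite group, `V` a finite-dimensional complex
representation of `G`, and `H ≤ G` a subgroup generated by elements acting on `V`
as involutions fixing a hyperplane pointwise. Then the `G`-invariants of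
`ℂ[G/H] ⊗ Λ V` (diagonal action) have dimension `2 ^ dim V^H`. -/
theorem finrank_invariants_permutation_tensor_exterior
    {G : Type*} [Group G] [Finite G] (H : Subgroup G)
    {V : Type*} [AddCommGroup V] [Module ℂ V] [FiniteDimensional ℂ V]
    (ρ : Representation ℂ G V)
    (S : Set G) (hgen : Subgroup.closure S = H)
    (hrefl : ∀ s ∈ S, ρ s * ρ s = 1 ∧
      Module.finrank ℂ (LinearMap.ker (ρ s - 1)) + 1 = Module.finrank ℂ V)
    (τ : Representation ℂ G (ExteriorAlgebra ℂ V))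
    (hτ : ∀ g : G, τ g = (ExteriorAlgebra.map (ρ g)).toLinearMap) :
    Module.finrank ℂ
        ((Representation.ofMulAction ℂ G (G ⧸ H)).tprod τ).invariants =
      2 ^ Module.finrank ℂ (Representation.invariants (ρ.comp H.subtype)) := by
  rw [ReflExt.finrank_frob]
  set W := Representation.invariants (ρ.comp H.subtype) with hW
  have hinj : Function.Injective (ExteriorAlgebra.map W.subtype) :=
    ExteriorAlgebra.map_injective_field W.ker_subtype
  have hmain : Representation.invariants (τ.comp H.subtype) =
      LinearMap.range (ExteriorAlgebra.map W.subtype).toLinearMap := by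
    apply le_antisymm
    · intro x hx
      rw [Representation.mem_invariants] at hx
      apply ReflExt.mem_range_of_ctr
      let F : Submodule ℂ (Module.Dual ℂ V) := LinearMap.ker (ReflExt.ctr.flip x)
      have hF : F.dualCoannihilator ≤ W := by
        intro v hv
        rw [Submodule.mem_dualCoannihilator] at hv
        rw [hW, Representation.mem_invariants]
        have hS : ∀ s ∈ S, ρ s v = v := by
          intro s hs
          obtain ⟨f, u, hfu, hsf⟩ :=
            ReflExt.exists_transvection two_ne_zero (ρ s) (hrefl s hs).1 (hrefl s hs).2
          have hxs : τ s x = x := hx ⟨s, hgen ▸ Subgroup.subset_closure hs⟩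
          rw [hτ, hsf] at hxs
          have hfv := hv f (ReflExt.ctr_eq_zero_of_fixed f u hfu x hxs)
          rw [hsf]
          simp [hfv]
        rintro ⟨h, hh⟩
        change ρ h v = v
        rw [← hgen] at hh
        induction hh using Subgroup.closure_induction with
        | mem s hs => exact hS s hs
        | one => simp
        | mul a b _ _ ha hb => rw [map_mul, Module.End.mul_apply, hb, ha]
        | inv a _ ha =>
          conv_lhs => rw [← ha]
          rw [← Module.End.mul_apply, ← map_mul]
          simp
      intro f hf
      have h1 : f ∈ F.dualCoannihilator.dualAnnihilator :=
        Submodule.dualAnnihilator_anti hF hf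
      rw [Subspace.dualCoannihilator_dualAnnihilator_eq] at h1
      exact h1
    · rintro _ ⟨y, rfl⟩
      rw [Representation.mem_invariants]
      rintro h
      change τ h _ = _
      rw [hτ]
      have : ρ h ∘ₗ W.subtype = W.subtype := by
        ext w
        exact (Representation.mem_invariants _ _).1 w.2 h
      change ((ExteriorAlgebra.map (ρ h)).comp (ExteriorAlgebra.map W.subtype)) y = _
      rw [ExteriorAlgebra.map_comp_map, this]
      rfl
  rw [hmain, ← ReflExt.finrank_exterior]
  exact LinearMap.finrank_range_of_inj hinj
end
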